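/- There exist constants C > 0 and s₁ ≥ 1, depending only on d and T, such that for all s ≥ s₁, λ ≥ s₁ and every admissible function v: ∫_Q { (1/(sφ))(|∂_t v|² + |Δv|²) + λ|∇v|² + sλ²φ|v|² } e^{2sφ} dx dt + ∫_{ℝ^d} ( sλ|v(x,0)|² e^{2s} + |∇v(x,T)|² e^{2sφ(T)} ) dx ≤ C ∫_Q |∂_t v − Δ v|² e^{2sφ} dx dt + C ∫_{ℝ^d} ( sλφ(T)|v(x,T)|² e^{2sφ(T)} + |∇v(x,0)|² e^{2s} ) dx. -/

import Mathlib

open MeasureTheory Real Set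

noncomputable section

/-- Spatial partial derivative of `f` in the `i`-th coordinate direction. -/
def spd {d : ℕ} (i : Fin d) (f : (Fin d → ℝ) → ℝ) (x : Fin d → ℝ) : ℝ :=
  fderiv ℝ f x (Pi.single i 1)

/-- Time derivative `∂_t u`. -/
def tder {d : ℕ} (u : (Fin d → ℝ) → ℝ → ℝ) (x : Fin d → ℝ) (t : ℝ) : ℝ :=
  deriv (u x) t

/-- Squared norm of the spatial gradient, `|∇u|²`. -/
def grad2 {d : ℕ} (u : (Fin d → ℝ) → ℝ → ℝ) (x : Fin d → ℝ) (t : ℝ) : ℝ :=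
  ∑ i : Fin d, (spd i (fun y => u y t) x) ^ 2

/-- Norm of the spatial gradient, `|∇u|`. -/
def gradNorm {d : ℕ} (u : (Fin d → ℝ) → ℝ → ℝ) (x : Fin d → ℝ) (t : ℝ) : ℝ :=
  Real.sqrt (grad2 u x t)

/-- Second spatial partial derivative `∂_i ∂_j u`. -/
def pdij {d : ℕ} (i j : Fin d) (u : (Fin d → ℝ) → ℝ → ℝ) (x : Fin d → ℝ) (t : ℝ) : ℝ :=
  spd i (fun y => spd j (fun z => u z t) y) x

/-- Spatial Laplacian `Δu`. -/
def lap {d : ℕ} (u : (Fin d → ℝ) → ℝ → ℝ) (x : Fin d → ℝ) (t : ℝ) : ℝ :=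
  ∑ i : Fin d, pdij i i u x t

/-- `Σ_{i,j=1}^d |∂_i∂_j u|²`. -/
def hess2 {d : ℕ} (u : (Fin d → ℝ) → ℝ → ℝ) (x : Fin d → ℝ) (t : ℝ) : ℝ :=
  ∑ i : Fin d, ∑ j : Fin d, (pdij i j u x t) ^ 2

/-- `u : ℝ^d × ℝ → ℝ` is admissible: `C^∞` and spatially compactly supported,
uniformly for `t ∈ [0,T]`. -/
def Admissible {d : ℕ} (T : ℝ) (u : (Fin d → ℝ) → ℝ → ℝ) : Prop :=
  ContDiff ℝ (⊤ : ℕ∞) (fun p : (Fin d → ℝ) × ℝ => u p.1 p.2) ∧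
  ∃ K₀ : Set (Fin d → ℝ), IsCompact K₀ ∧
    ∀ x t, x ∉ K₀ → t ∈ Set.Icc (0 : ℝ) T → u x t = 0

end

/-!
For a weight `e^{2ψ}` with `ψ = ψ(t)`, put `A = ∂_t v + ψ' v` and `B = Δv + ψ' v`, so that
`A - B = ∂_t v - Δv`. Integrating by parts in `x` shows that the energy
`∫ (|∇v|² - ψ' v²) e^{2ψ} dx` has time derivative `-∫ (2AB + ψ'' v²) e^{2ψ} dx`. As
`-2AB = (A - B)² - A² - B²`, integration over `(0, T)` gives the identity
`∫∫ (A² + B² + ψ'' v²) e^{2ψ} + [∫ (|∇v|² - ψ' v²) e^{2ψ} dx]₀ᵀ = ∫∫ |∂_t v - Δv|² e^{2ψ}`,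
whose boundary terms are exactly those of the Carleman estimate when `ψ = sφ`. Since then
`ψ'' = sλ²φ` and `sφ ≥ 1`, the left-hand side controls `sλ²φ v²` and, writing
`∂_t v = A - sλφ v` and `Δv = B - sλφ v`, also `(|∂_t v|² + |Δv|²) / (sφ)`. The gradient term
comes from `λ ∫ |∇v|² dx = -λ ∫ v Δv dx`.
-/

/-- The spatial partial derivative `∂_i u` of a time-dependent function, again as a time-dependent
function, so that it can be iterated. -/
noncomputable def spaceDeriv {d : ℕ} (i : Fin d) (u : (Fin d → ℝ) → ℝ → ℝ) (x : Fin d → ℝ)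
    (t : ℝ) : ℝ :=
  spd i (fun y => u y t) x

/-- The divergence `div (u ∇v) = ∇u · ∇v + u Δv`. -/
noncomputable def divMulGrad {d : ℕ} (u v : (Fin d → ℝ) → ℝ → ℝ) (x : Fin d → ℝ) (t : ℝ) : ℝ :=
  ∑ i, spaceDeriv i u x t * spaceDeriv i v x t + u x t * lap v x t

/-- The energy density `(|∇v|² − ψ' v²) e^{2ψ}` of the Carleman estimate with weight `e^{2ψ}`,
where `ψ'` stands for the derivative of `ψ`. -/
noncomputable def carlemanEnergy {d : ℕ} (ψ ψ' : ℝ → ℝ) (v : (Fin d → ℝ) → ℝ → ℝ)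
    (x : Fin d → ℝ) (t : ℝ) : ℝ :=
  (grad2 v x t - ψ' t * v x t ^ 2) * exp (2 * ψ t)

/-- The density `(|∂_t v + ψ' v|² + |Δv + ψ' v|² + ψ'' v²) e^{2ψ}` controlled by the Carleman
estimate with weight `e^{2ψ}`, where `ψ'` and `ψ''` stand for the derivatives of `ψ`. -/
noncomputable def carlemanBulk {d : ℕ} (ψ ψ' ψ'' : ℝ → ℝ) (v : (Fin d → ℝ) → ℝ → ℝ)
    (x : Fin d → ℝ) (t : ℝ) : ℝ :=
  ((tder v x t + ψ' t * v x t) ^ 2 + (lap v x t + ψ' t * v x t) ^ 2 + ψ'' t * v x t ^ 2)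
    * exp (2 * ψ t)

/-- The `j`-th time derivative of the weight `s φ(t) = s e^{lam t}`. -/
noncomputable def expWeight (s lam : ℝ) (j : ℕ) (t : ℝ) : ℝ :=
  s * lam ^ j * exp (lam * t)

/-- The density on the left-hand side of the Carleman estimate with weight `φ(t) = e^{lam t}`. -/
noncomputable def carlemanDensity {d : ℕ} (s lam : ℝ) (v : (Fin d → ℝ) → ℝ → ℝ)
    (x : Fin d → ℝ) (t : ℝ) : ℝ :=
  ((1 / (s * exp (lam * t))) * (tder v x t ^ 2 + lap v x t ^ 2)
    + lam * grad2 v x t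
    + s * lam ^ 2 * exp (lam * t) * v x t ^ 2)
  * exp (2 * s * exp (lam * t))

/-- `u` is jointly of class `C^n` on all of `E × ℝ` and, at the times in `I`, is supported in the
fixed set `K` of space. At `n = 0` this is the condition making `u` integrable over `E × I`. -/
structure SpatiallySupported {E : Type*} [NormedAddCommGroup E] [NormedSpace ℝ E]
    (n : WithTop ℕ∞) (K : Set E) (I : Set ℝ) (u : E → ℝ → ℝ) : Prop where
  contDiff : ContDiff ℝ n fun p : E × ℝ => u p.1 p.2
  eq_zero : ∀ x ∉ K, ∀ t ∈ I, u x t = 0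

section Derivatives

variable {d : ℕ} {n : WithTop ℕ∞} {u v : (Fin d → ℝ) → ℝ → ℝ}
  {x : Fin d → ℝ} {t : ℝ}

lemma spaceDeriv_eq_fderiv (hu : DifferentiableAt ℝ (fun p : (Fin d → ℝ) × ℝ => u p.1 p.2) (x, t))
    (i : Fin d) :
    spaceDeriv i u x t = fderiv ℝ (fun p : (Fin d → ℝ) × ℝ => u p.1 p.2) (x, t)
      (Pi.single i 1, 0) := by
  have h := hu.hasFDerivAt.comp (f := (·, t)) x (hasFDerivAt_prodMk_left x t)
  exact congrArg (· (Pi.single i 1)) h.fderiv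

lemma hasDerivAt_tder (hu : DifferentiableAt ℝ (fun p : (Fin d → ℝ) × ℝ => u p.1 p.2) (x, t)) :
    HasDerivAt (u x) (tder u x t) t :=
  (hu.comp (g := fun p : (Fin d → ℝ) × ℝ => u p.1 p.2) (f := (x, ·)) t
    (by fun_prop)).hasDerivAt

lemma tder_eq_fderiv (hu : DifferentiableAt ℝ (fun p : (Fin d → ℝ) × ℝ => u p.1 p.2) (x, t)) :
    tder u x t = fderiv ℝ (fun p : (Fin d → ℝ) × ℝ => u p.1 p.2) (x, t) (0, 1) := by
  have h : HasFDerivAt (u x) _ t :=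
    hu.hasFDerivAt.comp t (hasFDerivAt_prodMk_right x t)
  simp [tder, h.hasDerivAt.deriv]

lemma contDiff_spaceDeriv (hu : ContDiff ℝ (n + 1) fun p : (Fin d → ℝ) × ℝ => u p.1 p.2)
    (i : Fin d) : ContDiff ℝ n fun p : (Fin d → ℝ) × ℝ => spaceDeriv i u p.1 p.2 := by
  simp only [spaceDeriv_eq_fderiv (hu.differentiable (by simp) _)]
  exact (hu.fderiv_right le_rfl).clm_apply contDiff_const

lemma contDiff_tder (hu : ContDiff ℝ (n + 1) fun p : (Fin d → ℝ) × ℝ => u p.1 p.2) :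
    ContDiff ℝ n fun p : (Fin d → ℝ) × ℝ => tder u p.1 p.2 := by
  simp only [tder_eq_fderiv (hu.differentiable (by simp) _)]
  exact (hu.fderiv_right le_rfl).clm_apply contDiff_const

lemma fderiv_fderiv_apply_comm {E F : Type*} [NormedAddCommGroup E] [NormedSpace ℝ E]
    [NormedAddCommGroup F] [NormedSpace ℝ F] {f : E → F} {p : E} (hf : ContDiffAt ℝ 2 f p)
    (a b : E) :
    fderiv ℝ (fun q => fderiv ℝ f q b) p a = fderiv ℝ (fun q => fderiv ℝ f q a) p b := by
  have hf' : DifferentiableAt ℝ (fderiv ℝ f) p :=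
    (hf.fderiv_right (m := 1) le_rfl).differentiableAt one_ne_zero
  have hsymm : IsSymmSndFDerivAt ℝ f p := hf.isSymmSndFDerivAt (by simp)
  simpa [fderiv_clm_apply hf' (differentiableAt_const _)] using hsymm.eq a b

lemma tder_spaceDeriv_comm (hu : ContDiff ℝ 2 fun p : (Fin d → ℝ) × ℝ => u p.1 p.2)
    (i : Fin d) :
    tder (spaceDeriv i u) x t = spaceDeriv i (tder u) x t := by
  have hu' := hu.differentiable two_ne_zero
  rw [tder_eq_fderiv ((contDiff_spaceDeriv (n := 1) hu i).differentiable one_ne_zero _),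
    spaceDeriv_eq_fderiv ((contDiff_tder (n := 1) hu).differentiable one_ne_zero _)]
  simp only [spaceDeriv_eq_fderiv (hu' _), tder_eq_fderiv (hu' _)]
  exact fderiv_fderiv_apply_comm hu.contDiffAt _ _

lemma hasDerivAt_grad2 (hu : ContDiff ℝ 2 fun p : (Fin d → ℝ) × ℝ => u p.1 p.2)
    (x : Fin d → ℝ) (t : ℝ) :
    HasDerivAt (grad2 u x) (2 * ∑ i, spaceDeriv i (tder u) x t * spaceDeriv i u x t) t := by
  have h (i : Fin d) : HasDerivAt (fun r => spaceDeriv i u x r ^ 2)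
      (2 * (spaceDeriv i (tder u) x t * spaceDeriv i u x t)) t := by
    have hi := (hasDerivAt_tder
      ((contDiff_spaceDeriv (n := 1) hu i).differentiable one_ne_zero (x, t))).fun_pow 2
    rw [tder_spaceDeriv_comm hu] at hi
    exact hi.congr_deriv (by push_cast; ring)
  rw [Finset.mul_sum]
  exact HasDerivAt.fun_sum fun i _ => h i

lemma grad2_nonneg (u : (Fin d → ℝ) → ℝ → ℝ) (x : Fin d → ℝ) (t : ℝ) : 0 ≤ grad2 u x t :=
  Finset.sum_nonneg fun _ _ => sq_nonneg _

lemma divMulGrad_self (x : Fin d → ℝ) (t : ℝ) :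
    divMulGrad v v x t = grad2 v x t + v x t * lap v x t := by
  simp only [divMulGrad, grad2, spaceDeriv, sq]

end Derivatives

section IntegrationByParts

variable {d : ℕ} {f g : (Fin d → ℝ) → ℝ}

lemma contDiff_spd {n : WithTop ℕ∞} (hf : ContDiff ℝ (n + 1) f) (i : Fin d) :
    ContDiff ℝ n (spd i f) :=
  (hf.fderiv_right le_rfl).clm_apply contDiff_const

lemma continuous_spd (hf : ContDiff ℝ 1 f) (i : Fin d) : Continuous (spd i f) :=
  (hf.continuous_fderiv one_ne_zero).clm_apply continuous_const

lemma integrable_spd_mul (hf : ContDiff ℝ 1 f) (hfc : HasCompactSupport f) (hg : Continuous g)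
    (i : Fin d) : Integrable fun x => spd i f x * g x :=
  ((continuous_spd hf i).mul hg).integrable_of_hasCompactSupport
    (hfc.fderiv_apply ℝ (Pi.single i 1)).mul_right

lemma integrable_mul_spd (hf : Continuous f) (hfc : HasCompactSupport f) (hg : ContDiff ℝ 1 g)
    (i : Fin d) : Integrable fun x => f x * spd i g x :=
  (hf.mul (continuous_spd hg i)).integrable_of_hasCompactSupport hfc.mul_right

lemma integral_spd_mul_add_mul_spd (hf : ContDiff ℝ 1 f) (hfc : HasCompactSupport f)
    (hg : ContDiff ℝ 1 g) (i : Fin d) :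
    ∫ x, (spd i f x * g x + f x * spd i g x) = 0 := by
  have hfg : ∫ x, f x * spd i g x = -∫ x, spd i f x * g x :=
    integral_mul_fderiv_eq_neg_fderiv_mul_of_integrable
      (integrable_spd_mul hf hfc hg.continuous i) (integrable_mul_spd hf.continuous hfc hg i)
      ((hf.continuous.mul hg.continuous).integrable_of_hasCompactSupport hfc.mul_right)
      (fun x _ => hf.differentiable one_ne_zero x) (fun x _ => hg.differentiable one_ne_zero x)
  rw [integral_add (integrable_spd_mul hf hfc hg.continuous i)
    (integrable_mul_spd hf.continuous hfc hg i), hfg, add_neg_cancel]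

lemma integral_sum_spd_mul_spd_add_mul_sum_spd_spd (hf : ContDiff ℝ 1 f)
    (hfc : HasCompactSupport f) (hg : ContDiff ℝ 2 g) :
    ∫ x, (∑ i, spd i f x * spd i g x + f x * ∑ i, spd i (spd i g) x) = 0 := by
  have hg' (i : Fin d) : ContDiff ℝ 1 (spd i g) := contDiff_spd hg i
  simp only [Finset.mul_sum, ← Finset.sum_add_distrib]
  have hint (i : Fin d) :
      Integrable fun x => spd i f x * spd i g x + f x * spd i (spd i g) x :=
    (integrable_spd_mul hf hfc (hg' i).continuous i).add
      (integrable_mul_spd hf.continuous hfc (hg' i) i)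
  rw [integral_finsetSum _ fun i _ => hint i]
  exact Finset.sum_eq_zero fun i _ => integral_spd_mul_add_mul_spd hf hfc (hg' i) i

end IntegrationByParts

namespace SpatiallySupported

section Algebra

variable {E : Type*} [NormedAddCommGroup E] [NormedSpace ℝ E] {n m : WithTop ℕ∞} {K : Set E}
  {I : Set ℝ} {u v : E → ℝ → ℝ} {c : ℝ → ℝ}

lemma of_le (hu : SpatiallySupported n K I u) (hmn : m ≤ n) : SpatiallySupported m K I u :=
  ⟨hu.contDiff.of_le hmn, hu.eq_zero⟩

lemma add (hu : SpatiallySupported n K I u) (hv : SpatiallySupported n K I v) :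
    SpatiallySupported n K I fun x t => u x t + v x t :=
  ⟨hu.contDiff.add hv.contDiff, fun x hx t ht => by
    rw [hu.eq_zero x hx t ht, hv.eq_zero x hx t ht, add_zero]⟩

lemma sub (hu : SpatiallySupported n K I u) (hv : SpatiallySupported n K I v) :
    SpatiallySupported n K I fun x t => u x t - v x t :=
  ⟨hu.contDiff.sub hv.contDiff, fun x hx t ht => by
    rw [hu.eq_zero x hx t ht, hv.eq_zero x hx t ht, sub_zero]⟩

lemma mul (hu : SpatiallySupported n K I u) (hv : SpatiallySupported n K I v) :
    SpatiallySupported n K I fun x t => u x t * v x t :=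
  ⟨hu.contDiff.mul hv.contDiff, fun x hx t ht => by rw [hu.eq_zero x hx t ht, zero_mul]⟩

lemma sq (hu : SpatiallySupported n K I u) : SpatiallySupported n K I fun x t => u x t ^ 2 := by
  simpa only [pow_two] using hu.mul hu

lemma sum {ι : Type*} {s : Finset ι} {U : ι → E → ℝ → ℝ}
    (hU : ∀ i ∈ s, SpatiallySupported n K I (U i)) :
    SpatiallySupported n K I fun x t => ∑ i ∈ s, U i x t :=
  ⟨ContDiff.sum fun i hi => (hU i hi).contDiff, fun x hx t ht =>
    Finset.sum_eq_zero fun i hi => (hU i hi).eq_zero x hx t ht⟩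

lemma weight_mul (hu : SpatiallySupported n K I u) (hc : ContDiff ℝ n c) :
    SpatiallySupported n K I fun x t => c t * u x t :=
  ⟨(hc.comp contDiff_snd).mul hu.contDiff, fun x hx t ht => by
    rw [hu.eq_zero x hx t ht, mul_zero]⟩

lemma mul_weight (hu : SpatiallySupported n K I u) (hc : ContDiff ℝ n c) :
    SpatiallySupported n K I fun x t => u x t * c t := by
  simpa only [mul_comm] using hu.weight_mul hc

lemma contDiff_slice (hu : SpatiallySupported n K I u) (t : ℝ) :
    ContDiff ℝ n fun x => u x t :=
  hu.contDiff.comp (contDiff_prodMk_left t)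

lemma hasCompactSupport (hu : SpatiallySupported n K I u) (hK : IsCompact K) {t : ℝ}
    (ht : t ∈ I) : HasCompactSupport fun x => u x t :=
  HasCompactSupport.intro hK fun x hx => hu.eq_zero x hx t ht

end Algebra

section Integrals

variable {E : Type*} [NormedAddCommGroup E] [NormedSpace ℝ E] [MeasurableSpace E] [BorelSpace E]
  {μ : Measure E} [IsFiniteMeasureOnCompacts μ]
  {n : WithTop ℕ∞} {K : Set E} {I J : Set ℝ} {u : E → ℝ → ℝ} {a b : ℝ}

lemma integrable (hu : SpatiallySupported n K I u) (hK : IsCompact K) {t : ℝ} (ht : t ∈ I) :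
    Integrable (fun x => u x t) μ :=
  (hu.contDiff_slice t).continuous.integrable_of_hasCompactSupport (hu.hasCompactSupport hK ht)

variable [SecondCountableTopology E] [SFinite μ]

lemma integrable_prod (hu : SpatiallySupported n K I u) (hK : IsCompact K) (hI : IsCompact I)
    (hJ : MeasurableSet J) (hJI : J ⊆ I) :
    Integrable (Function.uncurry fun t x => u x t) ((volume.restrict J).prod μ) := by
  have hcont : Continuous (Function.uncurry fun t x => u x t) :=
    hu.contDiff.continuous.comp continuous_swap
  have hIK : IntegrableOn (Function.uncurry fun t x => u x t) (I ×ˢ K) (volume.prod μ) :=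
    hcont.continuousOn.integrableOn_compact (hI.prod hK)
  have hJE : IntegrableOn (Function.uncurry fun t x => u x t) (J ×ˢ univ) (volume.prod μ) :=
    hIK.of_forall_sdiff_eq_zero (hJ.prod .univ) fun ⟨t, x⟩ ⟨⟨ht, _⟩, hn⟩ =>
      hu.eq_zero x (fun hx => hn ⟨hJI ht, hx⟩) t (hJI ht)
  rwa [IntegrableOn, ← Measure.prod_restrict, Measure.restrict_univ] at hJE

lemma integrableOn_integral (hu : SpatiallySupported n K I u) (hK : IsCompact K)
    (hI : IsCompact I) (hJ : MeasurableSet J) (hJI : J ⊆ I) :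
    IntegrableOn (fun t => ∫ x, u x t ∂μ) J :=
  (hu.integrable_prod hK hI hJ hJI).integral_prod_left

lemma integral_integral_eq_integral_sub {u' : E → ℝ → ℝ} (hK : IsCompact K) (hab : a ≤ b)
    (hu : ∀ x t, HasDerivAt (u x) (u' x t) t) (hu' : SpatiallySupported n K (Icc a b) u') :
    ∫ t in Ioo a b, ∫ x, u' x t ∂μ = ∫ x, (u x b - u x a) ∂μ := by
  rw [integral_integral_swap
    (hu'.integrable_prod hK isCompact_Icc measurableSet_Ioo Ioo_subset_Icc_self)]
  refine integral_congr_ae (.of_forall fun x => ?_)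
  have hcont : Continuous (u' x) := hu'.contDiff.continuous.comp (by fun_prop : Continuous (x, ·))
  change ∫ t in Ioo a b, u' x t = u x b - u x a
  rw [← integral_Ioc_eq_integral_Ioo, ← intervalIntegral.integral_of_le hab]
  exact intervalIntegral.integral_eq_sub_of_hasDerivAt (fun t _ => hu x t)
    (hcont.intervalIntegrable a b)

end Integrals

section Differentiation

variable {d : ℕ} {n : WithTop ℕ∞} {K : Set (Fin d → ℝ)} {I : Set ℝ}
  {u v : (Fin d → ℝ) → ℝ → ℝ}

protected lemma spaceDeriv (hu : SpatiallySupported (n + 1) K I u) (hK : IsClosed K)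
    (i : Fin d) : SpatiallySupported n K I (spaceDeriv i u) := by
  refine ⟨contDiff_spaceDeriv hu.contDiff i, fun x hx t ht => ?_⟩
  have hzero : (fun y => u y t) =ᶠ[nhds x] fun _ => 0 := by
    filter_upwards [hK.isOpen_compl.mem_nhds hx] with y hy using hu.eq_zero y hy t ht
  simp [spaceDeriv, spd, hzero.fderiv_eq]

protected lemma tder (hu : SpatiallySupported (n + 1) K I u) (hI : UniqueDiffOn ℝ I) :
    SpatiallySupported n K I (tder u) := by
  refine ⟨contDiff_tder hu.contDiff, fun x hx t ht => ?_⟩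
  have hderiv : HasDerivWithinAt (u x) (tder u x t) I t :=
    (hasDerivAt_tder (hu.contDiff.differentiable (by simp) _)).hasDerivWithinAt
  exact (hI t ht).eq_deriv _ hderiv
    ((hasDerivWithinAt_const t I 0).congr (hu.eq_zero x hx) (hu.eq_zero x hx t ht))

protected lemma grad2 (hu : SpatiallySupported (n + 1) K I u) (hK : IsClosed K) :
    SpatiallySupported n K I (grad2 u) :=
  sum fun i _ => (hu.spaceDeriv hK i).sq

protected lemma lap (hu : SpatiallySupported (n + 1 + 1) K I u) (hK : IsClosed K) :
    SpatiallySupported n K I (lap u) :=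
  sum fun i _ => (hu.spaceDeriv hK i).spaceDeriv hK i

protected lemma divMulGrad (hu : SpatiallySupported (n + 1) K I u)
    (hv : SpatiallySupported (n + 1 + 1) K I v) (hK : IsClosed K) :
    SpatiallySupported n K I (divMulGrad u v) :=
  (sum fun i _ => (hu.spaceDeriv hK i).mul ((hv.of_le le_self_add).spaceDeriv hK i)).add
    ((hu.of_le le_self_add).mul (hv.lap hK))

lemma integral_divMulGrad (hu : SpatiallySupported 1 K I u)
    (hv : ContDiff ℝ 2 fun p : (Fin d → ℝ) × ℝ => v p.1 p.2) (hK : IsCompact K) {t : ℝ}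
    (ht : t ∈ I) : ∫ x, divMulGrad u v x t = 0 :=
  integral_sum_spd_mul_spd_add_mul_sum_spd_spd (hu.contDiff_slice t) (hu.hasCompactSupport hK ht)
    (hv.comp (contDiff_prodMk_left t))

end Differentiation

end SpatiallySupported

section Energy

variable {d : ℕ} {K : Set (Fin d → ℝ)} {I : Set ℝ} {v : (Fin d → ℝ) → ℝ → ℝ} {a b : ℝ}
  {ψ ψ' ψ'' : ℝ → ℝ}

lemma hasDerivAt_carlemanEnergy (hv : ContDiff ℝ 2 fun p : (Fin d → ℝ) × ℝ => v p.1 p.2)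
    (x : Fin d → ℝ) {t : ℝ} (hψ : HasDerivAt ψ (ψ' t) t) (hψ' : HasDerivAt ψ' (ψ'' t) t) :
    HasDerivAt (carlemanEnergy ψ ψ' v x)
      ((tder v x t - lap v x t) ^ 2 * exp (2 * ψ t) - carlemanBulk ψ ψ' ψ'' v x t
        + 2 * exp (2 * ψ t) * divMulGrad (tder v) v x t
        + 2 * ψ' t * exp (2 * ψ t) * divMulGrad v v x t) t := by
  have hv' := hasDerivAt_tder (hv.differentiable two_ne_zero (x, t))
  have hderiv := ((hasDerivAt_grad2 hv x t).fun_sub (hψ'.fun_mul (hv'.fun_pow 2))).fun_mul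
    (hψ.const_mul 2).exp
  refine hderiv.congr_deriv ?_
  rw [divMulGrad_self, divMulGrad, carlemanBulk]
  push_cast
  ring

lemma spatiallySupported_carlemanBulk (hv : SpatiallySupported 2 K I v) (hK : IsClosed K)
    (hI : UniqueDiffOn ℝ I) (hψ : Continuous ψ) (hψ' : Continuous ψ') (hψ'' : Continuous ψ'') :
    SpatiallySupported 0 K I (carlemanBulk ψ ψ' ψ'' v) := by
  have hv₀ : SpatiallySupported 0 K I v := hv.of_le (by simp)
  have hvt : SpatiallySupported 0 K I (tder v) := (hv.of_le one_le_two).tder hI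
  have hlap : SpatiallySupported 0 K I (lap v) := hv.lap hK
  have hψ'v := hv₀.weight_mul (contDiff_zero.2 hψ')
  exact (((hvt.add hψ'v).sq.add (hlap.add hψ'v).sq).add
    (hv₀.sq.weight_mul (contDiff_zero.2 hψ''))).mul_weight (contDiff_zero.2 (by fun_prop))

lemma spatiallySupported_sq_tder_sub_lap (hv : SpatiallySupported 2 K I v) (hK : IsClosed K)
    (hI : UniqueDiffOn ℝ I) {c : ℝ → ℝ} (hc : Continuous c) :
    SpatiallySupported 0 K I fun x t => (tder v x t - lap v x t) ^ 2 * c t :=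
  (((hv.of_le one_le_two).tder hI).sub (hv.lap hK)).sq.mul_weight (contDiff_zero.2 hc)

lemma spatiallySupported_deriv_carlemanEnergy (hv : SpatiallySupported 2 K I v) (hK : IsClosed K)
    (hI : UniqueDiffOn ℝ I) (hψ : Continuous ψ) (hψ' : Continuous ψ') (hψ'' : Continuous ψ'') :
    SpatiallySupported 0 K I fun x t =>
      (tder v x t - lap v x t) ^ 2 * exp (2 * ψ t) - carlemanBulk ψ ψ' ψ'' v x t
        + 2 * exp (2 * ψ t) * divMulGrad (tder v) v x t
        + 2 * ψ' t * exp (2 * ψ t) * divMulGrad v v x t := by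
  have hvt : SpatiallySupported 1 K I (tder v) := hv.tder hI
  have hdiv_t : SpatiallySupported 0 K I (divMulGrad (tder v) v) := hvt.divMulGrad hv hK
  have hdiv : SpatiallySupported 0 K I (divMulGrad v v) :=
    (hv.of_le one_le_two).divMulGrad hv hK
  exact (((spatiallySupported_sq_tder_sub_lap hv hK hI (by fun_prop)).sub
    (spatiallySupported_carlemanBulk hv hK hI hψ hψ' hψ'')).add
    (hdiv_t.weight_mul (contDiff_zero.2 (by fun_prop)))).add
    (hdiv.weight_mul (contDiff_zero.2 (by fun_prop)))

lemma integral_deriv_carlemanEnergy (hv : SpatiallySupported 2 K I v) (hK : IsCompact K)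
    (hI : UniqueDiffOn ℝ I) (hψ : Continuous ψ) (hψ' : Continuous ψ') (hψ'' : Continuous ψ'')
    {t : ℝ} (ht : t ∈ I) :
    ∫ x, ((tder v x t - lap v x t) ^ 2 * exp (2 * ψ t) - carlemanBulk ψ ψ' ψ'' v x t
        + 2 * exp (2 * ψ t) * divMulGrad (tder v) v x t
        + 2 * ψ' t * exp (2 * ψ t) * divMulGrad v v x t)
      = (∫ x, (tder v x t - lap v x t) ^ 2 * exp (2 * ψ t))
        - ∫ x, carlemanBulk ψ ψ' ψ'' v x t := by
  have hvt : SpatiallySupported 1 K I (tder v) := hv.tder hI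
  have hv₁ : SpatiallySupported 1 K I v := hv.of_le one_le_two
  have hheat : Integrable fun x => (tder v x t - lap v x t) ^ 2 * exp (2 * ψ t) :=
    (spatiallySupported_sq_tder_sub_lap hv hK.isClosed hI
      (c := fun t => exp (2 * ψ t)) (by fun_prop)).integrable hK ht
  have hbulk : Integrable fun x => carlemanBulk ψ ψ' ψ'' v x t :=
    (spatiallySupported_carlemanBulk hv hK.isClosed hI hψ hψ' hψ'').integrable hK ht
  have hsub : Integrable fun x =>
      (tder v x t - lap v x t) ^ 2 * exp (2 * ψ t) - carlemanBulk ψ ψ' ψ'' v x t :=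
    hheat.sub hbulk
  have hdiv_t : Integrable fun x => 2 * exp (2 * ψ t) * divMulGrad (tder v) v x t :=
    ((hvt.divMulGrad (n := 0) hv hK.isClosed).integrable hK ht).const_mul _
  have hdiv : Integrable fun x => 2 * ψ' t * exp (2 * ψ t) * divMulGrad v v x t :=
    ((hv₁.divMulGrad (n := 0) hv hK.isClosed).integrable hK ht).const_mul _
  rw [integral_add (hsub.fun_add hdiv_t) hdiv, integral_add hsub hdiv_t,
    integral_sub hheat hbulk, integral_const_mul, integral_const_mul,
    hvt.integral_divMulGrad hv.contDiff hK ht, hv₁.integral_divMulGrad hv.contDiff hK ht,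
    mul_zero, mul_zero, add_zero, add_zero]

theorem carleman_identity (hab : a < b) (hK : IsCompact K)
    (hv : SpatiallySupported 2 K (Icc a b) v) (hψ : ∀ t, HasDerivAt ψ (ψ' t) t)
    (hψ' : ∀ t, HasDerivAt ψ' (ψ'' t) t) (hψ'' : Continuous ψ'') :
    (∫ t in Ioo a b, ∫ x, carlemanBulk ψ ψ' ψ'' v x t)
        + ∫ x, (carlemanEnergy ψ ψ' v x b - carlemanEnergy ψ ψ' v x a)
      = ∫ t in Ioo a b, ∫ x, (tder v x t - lap v x t) ^ 2 * exp (2 * ψ t) := by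
  have hI : UniqueDiffOn ℝ (Icc a b) := uniqueDiffOn_Icc hab
  have hψc : Continuous ψ := continuous_iff_continuousAt.2 fun t => (hψ t).continuousAt
  have hψ'c : Continuous ψ' := continuous_iff_continuousAt.2 fun t => (hψ' t).continuousAt
  have hbulk := spatiallySupported_carlemanBulk hv hK.isClosed hI hψc hψ'c hψ''
  have hheat : SpatiallySupported 0 K (Icc a b) fun x t =>
      (tder v x t - lap v x t) ^ 2 * exp (2 * ψ t) :=
    spatiallySupported_sq_tder_sub_lap hv hK.isClosed hI (by fun_prop)
  rw [← SpatiallySupported.integral_integral_eq_integral_sub hK hab.le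
      (fun x t => hasDerivAt_carlemanEnergy hv.contDiff x (hψ t) (hψ' t))
      (spatiallySupported_deriv_carlemanEnergy hv hK.isClosed hI hψc hψ'c hψ''),
    setIntegral_congr_fun measurableSet_Ioo fun t ht =>
      integral_deriv_carlemanEnergy hv hK hI hψc hψ'c hψ'' (Ioo_subset_Icc_self ht),
    integral_sub
      (hheat.integrableOn_integral hK isCompact_Icc measurableSet_Ioo Ioo_subset_Icc_self)
      (hbulk.integrableOn_integral hK isCompact_Icc measurableSet_Ioo Ioo_subset_Icc_self),
    add_sub_cancel]

end Energy

section ExponentialWeight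

lemma one_div_mul_sq_le {k : ℝ} (hk : 1 ≤ k) (c w : ℝ) :
    1 / k * c ^ 2 ≤ 2 * (c + k * w) ^ 2 + 2 * (k * w ^ 2) := by
  have hk₀ : 0 < k := zero_lt_one.trans_le hk
  calc 1 / k * c ^ 2 ≤ 1 / k * (2 * (c + k * w) ^ 2 + 2 * (k * w) ^ 2) := by
        gcongr
        linarith [sq_nonneg (c + 2 * (k * w))]
    _ = 1 / k * (2 * (c + k * w) ^ 2) + 2 * (k * w ^ 2) := by field_simp
    _ ≤ 2 * (c + k * w) ^ 2 + 2 * (k * w ^ 2) := by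
        refine add_le_add_left ?_ _
        exact mul_le_of_le_one_left (by positivity) ((div_le_one hk₀).2 hk)

lemma one_div_mul_sq_add_sq_add_mul_sq_le {k : ℝ} (hk : 1 ≤ k) (a b w : ℝ) :
    1 / k * (a ^ 2 + b ^ 2) + k * w ^ 2
      ≤ 7 * ((a + k * w) ^ 2 + (b + k * w) ^ 2 + k * w ^ 2) + w * b := by
  have ha := one_div_mul_sq_le hk a w
  have hb := one_div_mul_sq_le hk b w
  have hw : w ^ 2 ≤ k * w ^ 2 := le_mul_of_one_le_left (sq_nonneg w) hk
  have hwb : -(w * b) ≤ k * w ^ 2 + ((b + k * w) ^ 2 + w ^ 2) := by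
    linarith [sq_nonneg (b + k * w + w), sq_nonneg (b + k * w), sq_nonneg w]
  linarith [sq_nonneg (a + k * w), sq_nonneg (b + k * w)]

variable {d : ℕ} {K : Set (Fin d → ℝ)} {I : Set ℝ} {v : (Fin d → ℝ) → ℝ → ℝ} {s lam T : ℝ}

lemma continuous_expWeight (s lam : ℝ) (j : ℕ) : Continuous (expWeight s lam j) := by
  unfold expWeight
  fun_prop

lemma hasDerivAt_expWeight (s lam : ℝ) (j : ℕ) (t : ℝ) :
    HasDerivAt (expWeight s lam j) (expWeight s lam (j + 1) t) t := by
  have hexp := (((hasDerivAt_id t).const_mul lam).exp).const_mul (s * lam ^ j)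
  exact hexp.congr_deriv (by simp only [id, expWeight]; ring)

lemma carlemanDensity_le (hs : 1 ≤ s) (hlam : 0 ≤ lam) (x : Fin d → ℝ) {t : ℝ} (ht : 0 ≤ t) :
    carlemanDensity s lam v x t ≤
      7 * carlemanBulk (expWeight s lam 0) (expWeight s lam 1) (expWeight s lam 2) v x t
        + lam * exp (2 * s * exp (lam * t)) * divMulGrad v v x t := by
  have hk : 1 ≤ s * exp (lam * t) :=
    one_le_mul_of_one_le_of_one_le hs (one_le_exp (mul_nonneg hlam ht))
  have hquad := mul_le_mul_of_nonneg_right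
    (one_div_mul_sq_add_sq_add_mul_sq_le hk (tder v x t) (lap v x t) (lam * v x t))
    (exp_pos (2 * s * exp (lam * t))).le
  simp only [carlemanDensity, carlemanBulk, expWeight, divMulGrad_self, pow_zero, pow_one, mul_one,
    ← mul_assoc 2 s]
  linear_combination hquad

lemma spatiallySupported_carlemanDensity (hv : SpatiallySupported 2 K I v) (hK : IsClosed K)
    (hI : UniqueDiffOn ℝ I) (hs : s ≠ 0) : SpatiallySupported 0 K I (carlemanDensity s lam v) := by
  have hv₁ : SpatiallySupported 1 K I v := hv.of_le one_le_two
  have hv₀ : SpatiallySupported 0 K I v := hv.of_le (by simp)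
  have hvt : SpatiallySupported 0 K I (tder v) := hv₁.tder hI
  have hlap : SpatiallySupported 0 K I (lap v) := hv.lap hK
  have hgrad : SpatiallySupported 0 K I (grad2 v) := hv₁.grad2 hK
  have hinv : Continuous fun t => 1 / (s * exp (lam * t)) :=
    continuous_const.div (by fun_prop) fun t => mul_ne_zero hs (exp_ne_zero _)
  exact ((((hvt.sq.add hlap.sq).weight_mul (contDiff_zero.2 hinv)).add
    (hgrad.weight_mul contDiff_const)).add
    (hv₀.sq.weight_mul (contDiff_zero.2 (by fun_prop)))).mul_weight
    (contDiff_zero.2 (by fun_prop))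

lemma integral_carlemanDensity_le (hv : SpatiallySupported 2 K I v) (hK : IsCompact K)
    (hI : UniqueDiffOn ℝ I) (hs : 1 ≤ s) (hlam : 0 ≤ lam) {t : ℝ} (htI : t ∈ I) (ht : 0 ≤ t) :
    ∫ x, carlemanDensity s lam v x t ≤
      7 * ∫ x, carlemanBulk (expWeight s lam 0) (expWeight s lam 1) (expWeight s lam 2) v x t := by
  have hv₁ : SpatiallySupported 1 K I v := hv.of_le one_le_two
  have hdens := (spatiallySupported_carlemanDensity (lam := lam) hv hK.isClosed hI
    (zero_lt_one.trans_le hs).ne').integrable (μ := volume) hK htI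
  have hbulk := ((spatiallySupported_carlemanBulk hv hK.isClosed hI
    (continuous_expWeight s lam 0) (continuous_expWeight s lam 1)
    (continuous_expWeight s lam 2)).integrable (μ := volume) hK htI).const_mul 7
  have hdiv := ((hv₁.divMulGrad (n := 0) hv hK.isClosed).integrable (μ := volume)
    hK htI).const_mul (lam * exp (2 * s * exp (lam * t)))
  refine (integral_mono hdens (hbulk.fun_add hdiv) fun x =>
    carlemanDensity_le hs hlam x ht).trans_eq ?_
  rw [integral_add hbulk hdiv, integral_const_mul, integral_const_mul,
    hv₁.integral_divMulGrad hv.contDiff hK htI, mul_zero, add_zero]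

lemma integral_integral_carlemanDensity_le (hT : 0 < T) (hK : IsCompact K)
    (hv : SpatiallySupported 2 K (Icc 0 T) v) (hs : 1 ≤ s) (hlam : 0 ≤ lam) :
    ∫ t in Ioo 0 T, ∫ x, carlemanDensity s lam v x t ≤
      7 * ∫ t in Ioo 0 T, ∫ x, carlemanBulk (expWeight s lam 0) (expWeight s lam 1)
        (expWeight s lam 2) v x t := by
  have hI : UniqueDiffOn ℝ (Icc 0 T) := uniqueDiffOn_Icc hT
  rw [← integral_const_mul]
  have hdens := spatiallySupported_carlemanDensity (lam := lam) hv hK.isClosed hI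
    (zero_lt_one.trans_le hs).ne'
  have hbulk := spatiallySupported_carlemanBulk hv hK.isClosed hI (continuous_expWeight s lam 0)
    (continuous_expWeight s lam 1) (continuous_expWeight s lam 2)
  exact setIntegral_mono_on
    (hdens.integrableOn_integral hK isCompact_Icc measurableSet_Ioo Ioo_subset_Icc_self)
    ((hbulk.integrableOn_integral hK isCompact_Icc measurableSet_Ioo
      Ioo_subset_Icc_self).const_mul 7) measurableSet_Ioo
    fun t ht => integral_carlemanDensity_le hv hK hI hs hlam (Ioo_subset_Icc_self ht) ht.1.le

lemma integral_carlemanEnergy_sub (hT : 0 ≤ T) (hK : IsCompact K)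
    (hv : SpatiallySupported 1 K (Icc 0 T) v) :
    ∫ x, (carlemanEnergy (expWeight s lam 0) (expWeight s lam 1) v x T
        - carlemanEnergy (expWeight s lam 0) (expWeight s lam 1) v x 0)
      = (∫ x, (s * lam * v x 0 ^ 2 * exp (2 * s)
          + grad2 v x T * exp (2 * s * exp (lam * T))))
        - ∫ x, (s * lam * exp (lam * T) * v x T ^ 2 * exp (2 * s * exp (lam * T))
          + grad2 v x 0 * exp (2 * s)) := by
  have hsq {t : ℝ} (ht : t ∈ Icc 0 T) : Integrable fun x => v x t ^ 2 := hv.sq.integrable hK ht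
  have hgrad {t : ℝ} (ht : t ∈ Icc 0 T) : Integrable fun x => grad2 v x t :=
    (hv.grad2 (n := 0) hK.isClosed).integrable hK ht
  have h0 : (0 : ℝ) ∈ Icc 0 T := left_mem_Icc.2 hT
  have hT' : T ∈ Icc 0 T := right_mem_Icc.2 hT
  rw [← integral_sub
    ((((hsq h0).const_mul (s * lam)).mul_const _).fun_add ((hgrad hT').mul_const _))
    ((((hsq hT').const_mul (s * lam * exp (lam * T))).mul_const _).fun_add
      ((hgrad h0).mul_const _))]
  refine integral_congr_ae (.of_forall fun x => ?_)
  simp only [carlemanEnergy, expWeight, mul_zero, exp_zero, mul_one, pow_zero, pow_one,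
    ← mul_assoc]
  ring

end ExponentialWeight

theorem carleman_forward_heat_general {d : ℕ} {T s lam : ℝ} (hT : 0 < T) (hs : 1 ≤ s)
    (hlam : 0 ≤ lam) {v : (Fin d → ℝ) → ℝ → ℝ} {K : Set (Fin d → ℝ)} (hK : IsCompact K)
    (hv : SpatiallySupported 2 K (Icc 0 T) v) :
    (∫ t in Ioo 0 T, ∫ x, carlemanDensity s lam v x t)
      + (∫ x, (s * lam * v x 0 ^ 2 * exp (2 * s) + grad2 v x T * exp (2 * s * exp (lam * T))))
      ≤ 7 * (∫ t in Ioo 0 T, ∫ x, (tder v x t - lap v x t) ^ 2 * exp (2 * s * exp (lam * t)))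
        + 7 * (∫ x, (s * lam * exp (lam * T) * v x T ^ 2 * exp (2 * s * exp (lam * T))
          + grad2 v x 0 * exp (2 * s))) := by
  have hdensity := integral_integral_carlemanDensity_le hT hK hv hs hlam
  have hidentity := carleman_identity hT hK hv (hasDerivAt_expWeight s lam 0)
    (hasDerivAt_expWeight s lam 1) (continuous_expWeight s lam 2)
  rw [integral_carlemanEnergy_sub hT.le hK (hv.of_le one_le_two)] at hidentity
  simp only [expWeight, pow_zero, mul_one, ← mul_assoc 2 s] at hidentity hdensity
  have hboundary : 0 ≤ ∫ x, (s * lam * v x 0 ^ 2 * exp (2 * s)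
      + grad2 v x T * exp (2 * s * exp (lam * T))) :=
    integral_nonneg fun x => add_nonneg
      (mul_nonneg (mul_nonneg (mul_nonneg (zero_le_one.trans hs) hlam) (sq_nonneg _))
        (exp_pos _).le)
      (mul_nonneg (grad2_nonneg v x T) (exp_pos _).le)
  linarith

/-- Carleman estimate (4.2) with two large parameters for the forward heat
operator `∂_t − Δ`, with weight `φ(t) = e^{λt}`. -/
theorem carleman_forward_heat
    (d : ℕ) (hd : 1 ≤ d) (T : ℝ) (hT : 0 < T) :
    ∃ C > (0:ℝ), ∃ s₁ ≥ (1:ℝ), ∀ s ≥ s₁, ∀ lam ≥ s₁,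
      ∀ v : (Fin d → ℝ) → ℝ → ℝ, Admissible T v →
      (∫ t in Set.Ioo (0:ℝ) T, ∫ x : Fin d → ℝ,
          ((1 / (s * Real.exp (lam * t))) * ((tder v x t) ^ 2 + (lap v x t) ^ 2)
            + lam * grad2 v x t
            + s * lam ^ 2 * Real.exp (lam * t) * (v x t) ^ 2)
          * Real.exp (2 * s * Real.exp (lam * t)))
      + (∫ x : Fin d → ℝ,
          (s * lam * (v x 0) ^ 2 * Real.exp (2 * s)
            + grad2 v x T * Real.exp (2 * s * Real.exp (lam * T))))
      ≤ C * (∫ t in Set.Ioo (0:ℝ) T, ∫ x : Fin d → ℝ,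
            (tder v x t - lap v x t) ^ 2 * Real.exp (2 * s * Real.exp (lam * t)))
        + C * (∫ x : Fin d → ℝ,
            (s * lam * Real.exp (lam * T) * (v x T) ^ 2
                * Real.exp (2 * s * Real.exp (lam * T))
              + grad2 v x 0 * Real.exp (2 * s))) :=
  ⟨7, by norm_num, 1, le_rfl, fun _ hs _ hlam _ ⟨hv, _, hK, hvK⟩ =>
    carleman_forward_heat_general hT hs (zero_le_one.trans hlam) hK
      ⟨hv.of_le (WithTop.coe_le_coe.2 le_top), fun x hx t ht => hvK x t hx ht⟩⟩
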